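/- Let λ be a real number with 6/7 < λ < (9 + √33)/12. If f is a close-to-convex function on the unit disk with Taylor coefficients a_k, then |λ a_3² − a_5| ≤ (λ(12 − 7λ) + 3(2 − λ)√(3λ(2 − λ))) / (λ(6 − 4λ)). -/

import Mathlib

/-!
If `g` is starlike then `g z = z * F z ^ 2`, and Jack's lemma applied to `1 - 1 / F` at the first
point where `Re F = 1 / 2` shows that `1 / 2 < Re F` on the disc (Marx–Strohhäcker). Hence the
derivative of a close-to-convex function is a product `p * F ^ 2` of three functions with values in
half-planes. A real-linear functional of the Taylor coefficients of one such factor is maximal at a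
half-plane map with its pole on the unit circle, so replacing the factors one at a time bounds the
functional of `f'` by its value at `(1 + b z) / ((1 - x z) (1 - y z) (1 - w z))`. A mean value
argument merges the three nodes into a single `W` of the closed disc. The Zalcman functional is
quadratic in the third coefficient, but after a rotation its real part is convex in the real part
of that coefficient, hence is bounded through its tangents by real-linear functionals. What remains
is a real quadratic inequality for two points `u = W ^ 2`, `v = b W` of the closed disc.
-/

open Complex Metric

/-- The k-th Taylor coefficient of `f` at `0`: `a_k = f^{(k)}(0)/k!`. -/
noncomputable def taylorCoeff (f : ℂ → ℂ) (k : ℕ) : ℂ :=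
  iteratedDeriv k f 0 / (Nat.factorial k)

/-- `g` is a (normalized) starlike function on the unit disk. -/
def IsStarlikeFn (g : ℂ → ℂ) : Prop :=
  DifferentiableOn ℂ g (ball (0 : ℂ) 1) ∧ g 0 = 0 ∧ deriv g 0 = 1 ∧
    ∀ z ∈ ball (0 : ℂ) 1 \ {0}, 0 < (z * deriv g z / g z).re

/-- `f` is a (normalized) close-to-convex function on the unit disk. -/
def IsCloseToConvex (f : ℂ → ℂ) : Prop :=
  DifferentiableOn ℂ f (ball (0 : ℂ) 1) ∧ f 0 = 0 ∧ deriv f 0 = 1 ∧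
    ∃ θ : ℝ, ∃ g : ℂ → ℂ, IsStarlikeFn g ∧
      ∀ z ∈ ball (0 : ℂ) 1 \ {0},
        0 < (Complex.exp (θ * Complex.I) * z * deriv f z / g z).re

section TaylorSeries

open Filter Topology PowerSeries

/-- The Taylor series of `f` at `0`. A finite linear functional of the Taylor coefficients is
written `coeff N (P * taylorSeries f)`, so that multiplying `f` by a fixed function only changes
the weight `P`. -/
noncomputable def taylorSeries (f : ℂ → ℂ) : ℂ⟦X⟧ :=
  PowerSeries.mk (taylorCoeff f)

lemma coeff_taylorSeries (f : ℂ → ℂ) (n : ℕ) : coeff n (taylorSeries f) = taylorCoeff f n :=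
  coeff_mk n _

lemma taylorCoeff_zero_right (f : ℂ → ℂ) : taylorCoeff f 0 = f 0 := by
  simp [taylorCoeff]

lemma taylorCoeff_deriv (f : ℂ → ℂ) (n : ℕ) :
    taylorCoeff (deriv f) n = (n + 1) * taylorCoeff f (n + 1) := by
  rw [taylorCoeff, taylorCoeff, iteratedDeriv_succ', Nat.factorial_succ]
  push_cast
  field_simp

lemma taylorCoeff_const_mul (c : ℂ) (f : ℂ → ℂ) (n : ℕ) :
    taylorCoeff (fun z => c * f z) n = c * taylorCoeff f n := by
  rw [taylorCoeff, taylorCoeff, iteratedDeriv_const_mul_field, mul_div_assoc]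

lemma taylorCoeff_succ_sub_const (f : ℂ → ℂ) (c : ℂ) (n : ℕ) :
    taylorCoeff (fun z => f z - c) (n + 1) = taylorCoeff f (n + 1) := by
  rw [taylorCoeff, taylorCoeff, iteratedDeriv_succ', iteratedDeriv_succ',
    deriv_sub_const_fun]

lemma taylorSeries_congr {f g : ℂ → ℂ} (h : f =ᶠ[𝓝 0] g) : taylorSeries f = taylorSeries g := by
  ext n
  simp only [coeff_taylorSeries, taylorCoeff, h.iteratedDeriv_eq n]

lemma taylorSeries_mul {f g : ℂ → ℂ} (hf : AnalyticAt ℂ f 0) (hg : AnalyticAt ℂ g 0) :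
    taylorSeries (f * g) = taylorSeries f * taylorSeries g := by
  ext n
  simp only [coeff_mul, coeff_taylorSeries, taylorCoeff]
  rw [iteratedDeriv_mul hf.contDiffAt hg.contDiffAt,
    Finset.Nat.sum_antidiagonal_eq_sum_range_succ
      (fun i j => iteratedDeriv i f 0 / (i.factorial : ℂ) * (iteratedDeriv j g 0 / j.factorial)),
    Finset.sum_div]
  refine Finset.sum_congr rfl fun i hi => ?_
  have hn : (n.factorial : ℂ) ≠ 0 := Nat.cast_ne_zero.mpr n.factorial_ne_zero
  rw [Nat.cast_choose ℂ (Finset.mem_range_succ_iff.mp hi)]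
  field_simp

end TaylorSeries

section GeometricSeries

open PowerSeries

/-- The power series of `1 / (1 - a X)`. -/
noncomputable def geomSeries (a : ℂ) : ℂ⟦X⟧ :=
  rescale a (mk 1)

lemma geomSeries_mul_one_sub (a : ℂ) : geomSeries a * (1 - C a * X) = 1 := by
  have h := congrArg (rescale a) (mk_one_mul_one_sub_eq_one ℂ)
  simpa [geomSeries, rescale_X] using h

lemma coeff_geomSeries_pow_succ (a : ℂ) (m n : ℕ) :
    coeff n (geomSeries a ^ (m + 1)) = (m + n).choose m * a ^ n := by
  rw [geomSeries, ← map_pow, mk_one_pow_eq_mk_choose_add, coeff_rescale, coeff_mk, mul_comm]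

lemma coeff_geomSeries (a : ℂ) (n : ℕ) : coeff n (geomSeries a) = a ^ n := by
  simpa using coeff_geomSeries_pow_succ a 0 n

lemma coeff_succ_one_add_C_mul_X_mul (v : ℂ) (S : ℂ⟦X⟧) (n : ℕ) :
    coeff (n + 1) ((1 + C v * X) * S) = coeff (n + 1) S + v * coeff n S := by
  rw [add_mul, one_mul, map_add, mul_assoc, coeff_C_mul, coeff_succ_X_mul]

lemma coeff_one_add_C_mul_X_mul_geomSeries_succ (d x : ℂ) (n : ℕ) :
    coeff (n + 1) ((1 + C (d * x) * X) * geomSeries x) = (1 + d) * x ^ (n + 1) := by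
  rw [coeff_succ_one_add_C_mul_X_mul, coeff_geomSeries, coeff_geomSeries]
  ring

lemma hasDerivAt_coeff_geomSeries_pow_succ (a : ℂ) (m n : ℕ) :
    HasDerivAt (fun a => coeff n (geomSeries a ^ (m + 1)))
      (coeff n (C (m + 1 : ℂ) * (X * geomSeries a ^ (m + 2)))) a := by
  simp only [coeff_geomSeries_pow_succ]
  refine ((hasDerivAt_pow n a).const_mul ((m + n).choose m : ℂ)).congr_deriv ?_
  rw [coeff_C_mul]
  cases n with
  | zero => simp
  | succ k =>
    rw [coeff_succ_X_mul, coeff_geomSeries_pow_succ a (m + 1) k, Nat.add_sub_cancel]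
    have hchoose : ((m + 1 : ℕ) : ℂ) * (m + 1 + k).choose (m + 1)
        = (m + (k + 1)).choose m * (k + 1 : ℕ) := by
      have h := Nat.choose_succ_right_eq (m + 1 + k) m
      rw [show m + 1 + k - m = k + 1 by lia, show m + 1 + k = m + (k + 1) by lia] at h
      rw [show m + 1 + k = m + (k + 1) by lia]
      exact_mod_cast (mul_comm _ _).trans h
    push_cast at hchoose ⊢
    linear_combination -a ^ k * hchoose

lemma hasDerivAt_coeff_mul {S : ℂ → ℂ⟦X⟧} {S' : ℂ⟦X⟧} {t : ℂ}
    (hS : ∀ n, HasDerivAt (fun t => coeff n (S t)) (coeff n S') t) (N : ℕ) (P : ℂ⟦X⟧) :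
    HasDerivAt (fun t => coeff N (P * S t)) (coeff N (P * S')) t := by
  simp only [coeff_mul]
  exact HasDerivAt.fun_sum fun p _ => (hS p.2).const_mul _

lemma hasDerivAt_pow_mul_coeff_geomSeries (u w t : ℂ) (m N : ℕ) (P : ℂ⟦X⟧) :
    HasDerivAt
      (fun t => t ^ (m + 1) *
        coeff N (P * geomSeries w * geomSeries (w + t * (u - w)) ^ (m + 1)))
      ((m + 1) * t ^ m * coeff N (P * geomSeries (w + t * (u - w)) ^ (m + 2))) t := by
  set W := w + t * (u - w) with hW
  have hline : HasDerivAt (fun t => w + t * (u - w)) (u - w) t := by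
    simpa using ((hasDerivAt_id t).mul_const (u - w)).const_add w
  have hseries (n : ℕ) : HasDerivAt (fun t => coeff n (geomSeries (w + t * (u - w)) ^ (m + 1)))
      (coeff n (C (u - w) * (C (m + 1 : ℂ) * (X * geomSeries W ^ (m + 2))))) t := by
    rw [coeff_C_mul, mul_comm]
    exact (hasDerivAt_coeff_geomSeries_pow_succ W m n).comp t hline
  refine ((hasDerivAt_pow (m + 1) t).mul
    (hasDerivAt_coeff_mul hseries N (P * geomSeries w))).congr_deriv ?_
  have hpartial : C (m + 1 : ℂ) * (P * geomSeries W ^ (m + 2))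
      = C (m + 1 : ℂ) * (P * geomSeries w * geomSeries W ^ (m + 1))
        + C t * (P * geomSeries w *
          (C (u - w) * (C (m + 1 : ℂ) * (X * geomSeries W ^ (m + 2))))) := by
    have hCW : C W = C w + C t * C (u - w) := by simp [hW]
    have hw := geomSeries_mul_one_sub w
    have hWW := geomSeries_mul_one_sub W
    rw [hCW] at hWW
    linear_combination C (m + 1 : ℂ) * P * geomSeries w * geomSeries W ^ (m + 1) * hWW
      - C (m + 1 : ℂ) * P * geomSeries W ^ (m + 2) * hw
  have hcoeff := congrArg (coeff N) hpartial
  rw [coeff_C_mul, (coeff N).map_add, coeff_C_mul, coeff_C_mul] at hcoeff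
  rw [Nat.add_sub_cancel, Nat.cast_succ, ← hW]
  linear_combination -t ^ m * hcoeff

/- Along `W = w + t (u - w)` the function `(t / (1 - W z)) ^ (m + 1) / (1 - w z)` of `t` has
derivative `(m + 1) t ^ m / (1 - W z) ^ (m + 2)`, so Cauchy's mean value theorem compares it with
`t ^ (m + 1)`. -/
lemma exists_mem_segment_re_coeff_mul_geomSeries_pow (u w : ℂ) (m N : ℕ) (P : ℂ⟦X⟧) :
    ∃ W ∈ segment ℝ w u, (coeff N (P * geomSeries w * geomSeries u ^ (m + 1))).re
      = (coeff N (P * geomSeries W ^ (m + 2))).re := by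
  set K : ℂ → ℂ := fun t =>
    t ^ (m + 1) * coeff N (P * geomSeries w * geomSeries (w + t * (u - w)) ^ (m + 1)) with hK
  have hderiv (t : ℝ) := (hasDerivAt_pow_mul_coeff_geomSeries u w t m N P).real_of_complex
  obtain ⟨t, ht, hmean⟩ := exists_ratio_hasDerivAt_eq_ratio_slope (fun t : ℝ => (K t).re) _
    zero_lt_one (fun t _ => (hderiv t).continuousAt.continuousWithinAt) (fun t _ => hderiv t)
    (fun t : ℝ => t ^ (m + 1)) _ (continuous_pow _).continuousOn
    (fun t _ => hasDerivAt_pow (m + 1) t)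
  refine ⟨w + t * (u - w), ?_, ?_⟩
  · rw [segment_eq_image']
    exact ⟨t, Set.Ioo_subset_Icc_self ht, by simp⟩
  · have hpos : (0 : ℝ) < (m + 1) * t ^ m := by have := ht.1; positivity
    have hfactor : ((m + 1) * t ^ m : ℂ) = ((m + 1) * t ^ m : ℝ) := by push_cast; rfl
    rw [hfactor, re_ofReal_mul] at hmean
    simp only [hK, ofReal_one, ofReal_zero, one_pow, zero_pow m.succ_ne_zero, zero_mul, one_mul,
      zero_re, sub_zero, add_sub_cancel, Nat.add_sub_cancel, Nat.cast_succ] at hmean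
    apply mul_left_cancel₀ hpos.ne'
    linear_combination -hmean

end GeometricSeries

section Caratheodory

open Filter Topology Real ComplexConjugate

variable {q : ℂ → ℂ} {r : ℝ}

lemma circleAverage_mul_div_pow (hr : 0 < r) (hq : DiffContOnCl ℂ q (ball 0 r)) (n : ℕ) :
    circleAverage (fun z => q z * (r / z) ^ n) 0 r = taylorCoeff q n * r ^ n := by
  have hscale : (∮ z in C(0, r), (z - 0)⁻¹ • (q z * (r / z) ^ n))
      = (r : ℂ) ^ n * ∮ z in C(0, r), (1 / (z - 0) ^ (n + 1)) • q z := by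
    rw [← circleIntegral.integral_const_mul]
    refine circleIntegral.integral_congr hr.le fun z hz => ?_
    have := ne_of_mem_sphere hz hr.ne'
    simp only [sub_zero, smul_eq_mul, div_pow]
    field_simp
    ring
  have hn : (n.factorial : ℂ) ≠ 0 := Nat.cast_ne_zero.mpr n.factorial_ne_zero
  rw [circleAverage_eq_circleIntegral hr.ne', hscale,
    hq.circleIntegral_one_div_sub_center_pow_smul hr n, taylorCoeff, smul_eq_mul, smul_eq_mul]
  field_simp [two_pi_I_ne_zero]

lemma conj_div_of_mem_sphere_zero {z : ℂ} (hz : z ∈ sphere (0 : ℂ) r) : conj (z / r) = r / z := by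
  rcases eq_or_ne r 0 with rfl | hr
  · simp
  have hz0 := ne_of_mem_sphere hz hr
  have hr0 : (r : ℂ) ≠ 0 := ofReal_ne_zero.mpr hr
  rw [map_div₀, conj_ofReal, div_eq_div_iff hr0 hz0, conj_mul', mem_sphere_zero_iff_norm.mp hz, sq]

lemma circleAverage_conj_mul_div_pow_succ (hr : 0 < r) (hq : DiffContOnCl ℂ q (ball 0 r)) (n : ℕ) :
    circleAverage (fun z => conj (q z) * (r / z) ^ (n + 1)) 0 r = 0 := by
  have hconj : Set.EqOn (fun z => conj (q z) * (r / z) ^ (n + 1))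
      ((conjCLE : ℂ →L[ℝ] ℂ) ∘ fun z => q z * (z / r) ^ (n + 1)) (sphere 0 |r|) := by
    rw [abs_of_pos hr]
    intro z hz
    simp [← conj_div_of_mem_sphere_zero hz]
  have hdiff : DiffContOnCl ℂ (fun z => q z * (z / r) ^ (n + 1)) (ball 0 |r|) := by
    rw [abs_of_pos hr]
    have hpow : Differentiable ℂ fun z : ℂ => (z / r) ^ (n + 1) := by fun_prop
    exact hq.smul hpow.diffContOnCl
  have hint : CircleIntegrable (fun z => q z * (z / r) ^ (n + 1)) 0 r :=
    (hdiff.continuousOn_ball.mono sphere_subset_closedBall).circleIntegrable'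
  rw [circleAverage_congr_sphere hconj, ContinuousLinearMap.circleAverage_comp_comm _ hint,
    hdiff.circleAverage]
  simp

lemma continuousOn_mul_div_pow (hr : 0 < r) {g : ℂ → ℂ} (hg : ContinuousOn g (sphere 0 r)) (n : ℕ) :
    ContinuousOn (fun z => g z * (r / z) ^ n) (sphere 0 r) :=
  hg.mul ((continuousOn_const.div continuousOn_id fun _ hz => ne_of_mem_sphere hz hr.ne').pow n)

lemma circleAverage_two_re_mul_div_pow_succ (hr : 0 < r) (hq : DiffContOnCl ℂ q (ball 0 r))
    (n : ℕ) : circleAverage (fun z => (2 * (q z).re : ℝ) * (r / z : ℂ) ^ (n + 1)) 0 r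
      = taylorCoeff q (n + 1) * r ^ (n + 1) := by
  have hcont : ContinuousOn q (sphere 0 r) :=
    hq.continuousOn_ball.mono sphere_subset_closedBall
  have hsplit : (fun z => (2 * (q z).re : ℝ) * (r / z : ℂ) ^ (n + 1))
      = fun z => q z * (r / z) ^ (n + 1) + conj (q z) * (r / z) ^ (n + 1) := by
    funext z
    rw [← add_mul, add_conj]
  rw [hsplit, circleAverage_fun_add ((continuousOn_mul_div_pow hr hcont _).circleIntegrable hr.le)
      ((continuousOn_mul_div_pow hr (g := fun z => conj (q z)) hcont.star _).circleIntegrable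
        hr.le),
    circleAverage_mul_div_pow hr hq, circleAverage_conj_mul_div_pow_succ hr hq, add_zero]

lemma continuousOn_sum_mul_div_pow (hr : 0 < r) (s : Finset ℕ) (α : ℕ → ℂ) :
    ContinuousOn (fun z : ℂ => ∑ n ∈ s, α n * (r / z) ^ (n + 1)) (sphere 0 r) :=
  continuousOn_finsetSum _ fun n _ => continuousOn_mul_div_pow hr continuousOn_const (n + 1)

lemma circleAverage_two_re_mul_re_sum (hr : 0 < r) (hq : DiffContOnCl ℂ q (ball 0 r))
    (s : Finset ℕ) (α : ℕ → ℂ) :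
    circleAverage (fun z => 2 * (q z).re * (∑ n ∈ s, α n * (r / z) ^ (n + 1)).re) 0 r
      = (∑ n ∈ s, α n * (taylorCoeff q (n + 1) * r ^ (n + 1))).re := by
  have hcont : ContinuousOn (fun z => ((2 * (q z).re : ℝ) : ℂ)) (sphere 0 r) :=
    continuous_ofReal.comp_continuousOn ((continuous_re.comp_continuousOn
      (hq.continuousOn_ball.mono sphere_subset_closedBall)).const_smul (2 : ℝ))
  have hterm (n : ℕ) : CircleIntegrable
      (fun z => α n • ((2 * (q z).re : ℝ) * (r / z : ℂ) ^ (n + 1))) 0 r :=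
    ((continuousOn_mul_div_pow hr hcont (n + 1)).const_smul (α n)).circleIntegrable hr.le
  calc circleAverage (fun z => 2 * (q z).re * (∑ n ∈ s, α n * (r / z) ^ (n + 1)).re) 0 r
      = circleAverage (reCLM ∘
          fun z => ∑ n ∈ s, α n • ((2 * (q z).re : ℝ) * (r / z : ℂ) ^ (n + 1))) 0 r := by
        congr 1
        funext z
        simp only [Function.comp_apply, reCLM_apply, smul_eq_mul, mul_left_comm (α _),
          ← Finset.mul_sum, re_ofReal_mul]
    _ = (∑ n ∈ s, circleAverage
          (fun z => α n • ((2 * (q z).re : ℝ) * (r / z : ℂ) ^ (n + 1))) 0 r).re := by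
        rw [ContinuousLinearMap.circleAverage_comp_comm _ (CircleIntegrable.fun_sum s fun n _ =>
          hterm n), circleAverage_fun_sum fun n _ => hterm n, reCLM_apply]
    _ = (∑ n ∈ s, α n * (taylorCoeff q (n + 1) * r ^ (n + 1))).re := by
        refine congrArg re (Finset.sum_congr rfl fun n _ => ?_)
        rw [circleAverage_fun_smul, circleAverage_two_re_mul_div_pow_succ hr hq, smul_eq_mul]

lemma re_sum_mul_taylorCoeff_mul_pow_le (hr : 0 < r) (hq : DiffContOnCl ℂ q (ball 0 r))
    (hre : ∀ z ∈ sphere (0 : ℂ) r, 0 ≤ (q z).re) {s : Finset ℕ} {α : ℕ → ℂ} {K : ℝ}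
    (hK : ∀ x : ℂ, ‖x‖ = 1 → (∑ n ∈ s, α n * x ^ (n + 1)).re ≤ K) :
    (∑ n ∈ s, α n * (taylorCoeff q (n + 1) * r ^ (n + 1))).re ≤ 2 * (q 0).re * K := by
  have hcont : ContinuousOn q (sphere 0 r) :=
    hq.continuousOn_ball.mono sphere_subset_closedBall
  have hRe : ContinuousOn (fun z => (q z).re) (sphere 0 r) :=
    continuous_re.comp_continuousOn hcont
  have hle : ∀ z ∈ sphere (0 : ℂ) |r|,
      2 * (q z).re * (∑ n ∈ s, α n * (r / z) ^ (n + 1)).re ≤ (2 * K) • (q z).re := by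
    rw [abs_of_pos hr]
    intro z hz
    have hnorm : ‖(r : ℂ) / z‖ = 1 := by
      rw [norm_div, mem_sphere_zero_iff_norm.mp hz, norm_real, norm_of_nonneg hr.le,
        div_self hr.ne']
    rw [smul_eq_mul]
    linarith [mul_le_mul_of_nonneg_left (hK _ hnorm) (hre z hz)]
  rw [← circleAverage_two_re_mul_re_sum hr hq]
  calc circleAverage (fun z => 2 * (q z).re * (∑ n ∈ s, α n * (r / z) ^ (n + 1)).re) 0 r
      ≤ circleAverage (fun z => (2 * K) • (q z).re) 0 r :=
        circleAverage_mono (((hRe.const_smul (2 : ℝ)).mul (continuous_re.comp_continuousOn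
          (continuousOn_sum_mul_div_pow hr s α))).circleIntegrable hr.le)
          ((hRe.const_smul (2 * K)).circleIntegrable hr.le) hle
    _ = (2 * K) * (circleAverage q 0 r).re := by
        rw [circleAverage_fun_smul, smul_eq_mul]
        exact congrArg _ (reCLM.circleAverage_comp_comm (hcont.circleIntegrable hr.le))
    _ = 2 * (q 0).re * K := by
        rw [DiffContOnCl.circleAverage (by rwa [abs_of_pos hr])]
        ring

lemma exists_norm_eq_one_re_sum_mul_taylorCoeff_le (hq : DifferentiableOn ℂ q (ball 0 1))
    (hre : ∀ z ∈ ball (0 : ℂ) 1 \ {0}, 0 ≤ (q z).re) (s : Finset ℕ) (α : ℕ → ℂ) :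
    ∃ x : ℂ, ‖x‖ = 1 ∧ (∑ n ∈ s, α n * taylorCoeff q (n + 1)).re
      ≤ 2 * (q 0).re * (∑ n ∈ s, α n * x ^ (n + 1)).re := by
  obtain ⟨x, hx, hmax⟩ := (isCompact_sphere (0 : ℂ) 1).exists_isMaxOn ⟨1, by simp⟩
    (f := fun x => (∑ n ∈ s, α n * x ^ (n + 1)).re) (by fun_prop)
  refine ⟨x, mem_sphere_zero_iff_norm.mp hx, ?_⟩
  have hlim : Tendsto
      (fun r : ℝ => (∑ n ∈ s, α n * (taylorCoeff q (n + 1) * (r : ℂ) ^ (n + 1))).re)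
      (𝓝[<] 1) (𝓝 (∑ n ∈ s, α n * taylorCoeff q (n + 1)).re) := by
    refine Tendsto.mono_left ?_ nhdsWithin_le_nhds
    refine Continuous.tendsto' (by fun_prop) _ _ (by simp)
  refine le_of_tendsto hlim ?_
  filter_upwards [Ioo_mem_nhdsLT zero_lt_one] with r ⟨hr0, hr1⟩
  refine re_sum_mul_taylorCoeff_mul_pow_le hr0
    (hq.mono (closure_ball_subset_closedBall.trans (closedBall_subset_ball hr1))).diffContOnCl
    (fun z hz => hre z ⟨?_, ne_of_mem_sphere hz hr0.ne'⟩)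
    fun x hx => hmax (mem_sphere_zero_iff_norm.mpr hx)
  exact closedBall_subset_ball hr1 (sphere_subset_closedBall hz)

end Caratheodory

section HalfPlane

open PowerSeries ComplexConjugate

lemma re_coeff_mul_eq_add_sum (N : ℕ) (P S : ℂ⟦X⟧) :
    (coeff N (P * S)).re = (coeff N P * coeff 0 S).re
      + (∑ n ∈ Finset.range N, coeff (N - (n + 1)) P * coeff (n + 1) S).re := by
  rw [mul_comm P, coeff_mul, Finset.Nat.sum_antidiagonal_eq_sum_range_succ
    (fun i j => coeff i S * coeff j P), Finset.sum_range_succ', add_comm, add_re, Nat.sub_zero,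
    mul_comm (coeff 0 S)]
  simp only [mul_comm (coeff _ S)]

/- The right-hand series is that of the map `z ↦ (1 + d x z) / (1 - x z)` of the disc onto the
half-plane `s < Re (e w)`. -/
lemma exists_norm_eq_one_re_coeff_mul_taylorSeries_le {φ : ℂ → ℂ} {e : ℂ} {s : ℝ} (he : ‖e‖ = 1)
    (hφ : DifferentiableOn ℂ φ (ball 0 1)) (hφ0 : φ 0 = 1)
    (hre : ∀ z ∈ ball (0 : ℂ) 1 \ {0}, s ≤ (e * φ z).re) (N : ℕ) (P : ℂ⟦X⟧) :
    ∃ x : ℂ, ‖x‖ = 1 ∧ (coeff N (P * taylorSeries φ)).re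
      ≤ (coeff N (P * ((1 + C (conj e * (conj e - 2 * s) * x) * X) * geomSeries x))).re := by
  set d := conj e * (conj e - 2 * s) with hd
  have hunit : e * conj e = 1 := by rw [mul_conj', he]; simp
  obtain ⟨x, hx, hle⟩ := exists_norm_eq_one_re_sum_mul_taylorCoeff_le
    (q := fun z => e * φ z - s) ((hφ.const_mul e).sub_const _)
    (fun z hz => by simpa using hre z hz) (Finset.range N)
    (fun n => coeff (N - (n + 1)) P * conj e)
  refine ⟨x, hx, ?_⟩
  have hone_add : 1 + d = conj e * (2 * (e.re - s) : ℝ) := by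
    have := add_conj e
    push_cast at this ⊢
    linear_combination hd - hunit + conj e * this
  have hcoeff (n : ℕ) : coeff (N - (n + 1)) P * conj e *
      taylorCoeff (fun z => e * φ z - s) (n + 1)
        = coeff (N - (n + 1)) P * coeff (n + 1) (taylorSeries φ) := by
    rw [taylorCoeff_succ_sub_const, taylorCoeff_const_mul, coeff_taylorSeries]
    linear_combination coeff (N - (n + 1)) P * taylorCoeff φ (n + 1) * hunit
  have hkernel (n : ℕ) : (2 * (e.re - s) : ℝ) * (coeff (N - (n + 1)) P * conj e * x ^ (n + 1))
        = coeff (N - (n + 1)) P * coeff (n + 1) ((1 + C (d * x) * X) * geomSeries x) := by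
    rw [coeff_one_add_C_mul_X_mul_geomSeries_succ, hone_add]
    ring
  have hkernel0 : coeff 0 ((1 + C (d * x) * X) * geomSeries x) = 1 := by
    have := coeff_geomSeries x 0
    simp_all [coeff_zero_eq_constantCoeff]
  simp only [hcoeff, hφ0, mul_one, sub_re, ofReal_re] at hle
  rw [re_coeff_mul_eq_add_sum N P (taylorSeries φ), re_coeff_mul_eq_add_sum N P (_ * _),
    coeff_taylorSeries, taylorCoeff_zero_right, hφ0, hkernel0]
  simp only [← hkernel, ← Finset.mul_sum, re_ofReal_mul]
  gcongr

end HalfPlane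

section Jack

open Set Filter Topology

lemma re_nonneg_and_im_eq_zero_of_isMaxOn_re {χ : ℂ → ℂ} {χ' : ℂ} (hχ : HasDerivAt χ χ' 0)
    (hmax : IsMaxOn (fun ζ => (χ ζ).re) {ζ | ζ.re ≤ 0} 0) : 0 ≤ χ'.re ∧ χ'.im = 0 := by
  have hslope {v : ℂ} (hv : v.re ≤ 0) : (v * χ').re ≤ 0 := by
    have hcone : v ∈ posTangentConeAt {ζ : ℂ | ζ.re ≤ 0} 0 :=
      mem_posTangentConeAt_of_segment_subset ((convex_halfSpace_re_le 0).segment_subset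
        (by simp) (by simpa using hv))
    simpa using hmax.localize.hasFDerivWithinAt_nonpos
      (reCLM.hasFDerivAt.comp (0 : ℂ) (hχ.hasFDerivAt.restrictScalars ℝ)).hasFDerivWithinAt hcone
  have hneg := hslope (v := -1) (by simp)
  have hI := hslope (v := I) (by simp)
  have hnegI := hslope (v := -I) (by simp)
  simp only [neg_mul, one_mul, neg_re, Left.neg_nonpos_iff, mul_re, I_re, zero_mul, I_im, zero_sub,
    neg_neg] at hneg hI hnegI
  exact ⟨hneg, le_antisymm hnegI hI⟩

lemma norm_le_div_mul_norm_of_forall_norm_le {ω : ℂ → ℂ} {R : ℝ} {z₀ : ℂ}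
    (hω : DifferentiableOn ℂ ω (ball 0 R)) (hω0 : ω 0 = 0) (hz₀ : z₀ ∈ ball 0 R)
    (hmax : ∀ z ∈ closedBall 0 ‖z₀‖, ‖ω z‖ ≤ ‖ω z₀‖) {z : ℂ} (hz : z ∈ closedBall 0 ‖z₀‖) :
    ‖ω z‖ ≤ ‖ω z₀‖ / ‖z₀‖ * ‖z‖ := by
  rcases (mem_closedBall_zero_iff.mp hz).lt_or_eq with hlt | heq
  · simpa [hω0] using dist_le_div_mul_dist_of_mapsTo_ball
      (hω.mono (ball_subset_ball (mem_ball_zero_iff.mp hz₀).le))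
      (fun w hw => by simpa [hω0] using hmax w (ball_subset_closedBall hw))
      (mem_ball_zero_iff.mpr hlt)
  · rcases eq_or_ne z₀ 0 with rfl | hz₀0
    · simp_all
    · rw [heq, div_mul_cancel₀ _ (norm_ne_zero_iff.mpr hz₀0)]
      exact hmax z hz

/- **Jack's lemma.** By Schwarz, `ζ ↦ ω (z₀ exp ζ) exp (-ζ) / ω z₀` maps the left half-plane into
the closed unit disc and `0` to `1`, so its derivative `z₀ ω' z₀ / ω z₀ - 1` at `0` is
nonnegative. -/
lemma exists_one_le_mul_deriv_eq_mul {ω : ℂ → ℂ} {R : ℝ} {z₀ : ℂ}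
    (hω : DifferentiableOn ℂ ω (ball 0 R)) (hω0 : ω 0 = 0) (hz₀ : z₀ ∈ ball 0 R) (hne : ω z₀ ≠ 0)
    (hmax : ∀ z ∈ closedBall 0 ‖z₀‖, ‖ω z‖ ≤ ‖ω z₀‖) :
    ∃ k : ℝ, 1 ≤ k ∧ z₀ * deriv ω z₀ = k * ω z₀ := by
  have hz₀0 : z₀ ≠ 0 := fun h => hne (h ▸ hω0)
  set χ : ℂ → ℂ := fun ζ => ω (z₀ * exp ζ) * exp (-ζ) / ω z₀ with hχ
  have hderiv : HasDerivAt χ (z₀ * deriv ω z₀ / ω z₀ - 1) 0 := by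
    have hdiff : HasDerivAt ω (deriv ω (z₀ * exp 0)) (z₀ * exp 0) := by
      simpa using (hω.differentiableAt (isOpen_ball.mem_nhds hz₀)).hasDerivAt
    have hexp := (hasDerivAt_exp 0).const_mul z₀
    refine (((hdiff.comp 0 hexp).mul (hasDerivAt_neg 0).cexp).div_const _).congr_deriv ?_
    simp only [exp_zero, mul_one, neg_zero, Function.comp_apply, mul_neg]
    field_simp
    ring
  have hmaxχ : IsMaxOn (fun ζ => (χ ζ).re) {ζ | ζ.re ≤ 0} 0 := by
    intro ζ hζ
    have hmem : z₀ * exp ζ ∈ closedBall (0 : ℂ) ‖z₀‖ := by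
      rw [mem_closedBall_zero_iff, norm_mul, norm_exp]
      exact mul_le_of_le_one_right (norm_nonneg _) (Real.exp_le_one_iff.mpr hζ)
    calc (χ ζ).re ≤ ‖ω (z₀ * exp ζ)‖ * Real.exp (-ζ.re) / ‖ω z₀‖ := by
          refine (re_le_norm _).trans_eq ?_
          rw [hχ, norm_div, norm_mul, norm_exp, neg_re]
      _ ≤ ‖ω z₀‖ / ‖z₀‖ * ‖z₀ * exp ζ‖ * Real.exp (-ζ.re) / ‖ω z₀‖ := by
          gcongr
          exact norm_le_div_mul_norm_of_forall_norm_le hω hω0 hz₀ hmax hmem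
      _ = 1 := by
          rw [norm_mul, norm_exp, Real.exp_neg]
          field_simp
      _ = (χ 0).re := by simp [hχ, hne]
  obtain ⟨hre, him⟩ := re_nonneg_and_im_eq_zero_of_isMaxOn_re hderiv hmaxχ
  refine ⟨(z₀ * deriv ω z₀ / ω z₀).re, by simpa using hre, ?_⟩
  have hreal : ((z₀ * deriv ω z₀ / ω z₀).re : ℂ) = z₀ * deriv ω z₀ / ω z₀ :=
    Complex.ext (by simp) (by simpa using him.symm)
  rw [hreal, div_mul_cancel₀ _ hne]

lemma exists_mem_ball_forall_closedBall_norm_le {E : Type*} [NormedAddCommGroup E]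
    [NormedSpace ℝ E] [ProperSpace E] {u : E → ℝ} {R c : ℝ} (hu : ContinuousOn u (ball 0 R))
    (hu0 : u 0 < c) {z₁ : E} (hz₁ : z₁ ∈ ball 0 R) (hcz₁ : c ≤ u z₁) :
    ∃ z₀ ∈ ball (0 : E) R, u z₀ = c ∧ ∀ z ∈ closedBall 0 ‖z₀‖, u z ≤ c := by
  have hsub : closedBall (0 : E) ‖z₁‖ ⊆ ball 0 R :=
    closedBall_subset_ball (mem_ball_zero_iff.mp hz₁)
  have hcompact : IsCompact (closedBall (0 : E) ‖z₁‖ ∩ u ⁻¹' Ici c) :=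
    (isCompact_closedBall 0 ‖z₁‖).of_isClosed_subset
      ((hu.mono hsub).preimage_isClosed_of_isClosed isClosed_closedBall isClosed_Ici)
      inter_subset_left
  obtain ⟨z₀, ⟨hz₀, hcz₀⟩, hmin⟩ := hcompact.exists_isMinOn ⟨z₁, by simpa using hcz₁⟩
    continuous_norm.continuousOn
  have hz₀R := hsub hz₀
  have hsub₀ : closedBall (0 : E) ‖z₀‖ ⊆ ball 0 R :=
    closedBall_subset_ball (mem_ball_zero_iff.mp hz₀R)
  have hlt : ∀ z ∈ ball (0 : E) ‖z₀‖, u z ≤ c := by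
    intro z hz
    by_contra! hcz
    have hz' := mem_ball_zero_iff.mp hz
    exact hz'.not_ge (hmin ⟨by simpa using hz'.le.trans (by simpa using hz₀), hcz.le⟩)
  have hz₀0 : ‖z₀‖ ≠ 0 := by
    rintro h
    rw [norm_eq_zero.mp h] at hcz₀
    exact hu0.not_ge hcz₀
  have hle : ∀ z ∈ closedBall (0 : E) ‖z₀‖, u z ≤ c := by
    intro z hz
    rw [← closure_ball 0 hz₀0] at hz
    refine le_on_closure hlt ?_ continuousOn_const hz
    rw [closure_ball 0 hz₀0]
    exact hu.mono hsub₀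
  exact ⟨z₀, hz₀R, (hle z₀ (by simp)).antisymm hcz₀, hle⟩

end Jack

section StarlikeFunctions

open Set

lemma exists_eq_mul_exp_on_ball {G : ℂ → ℂ} {c : ℂ} {R : ℝ} (hG : DifferentiableOn ℂ G (ball c R))
    (hne : ∀ z ∈ ball c R, G z ≠ 0) :
    ∃ l : ℂ → ℂ, DifferentiableOn ℂ l (ball c R) ∧ l c = 0 ∧
      ∀ z ∈ ball c R, G z = G c * exp (l z) := by
  obtain ⟨l, hlc, hl⟩ := ((hG.deriv isOpen_ball).div hG hne).isExactOn_ball.with_val_at c 0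
  refine ⟨l, fun z hz => (hl z hz).differentiableAt.differentiableWithinAt, hlc, fun z hz => ?_⟩
  have hderiv : ∀ w ∈ ball c R, HasDerivAt (fun w => G w * exp (-l w)) 0 w := by
    intro w hw
    have hGw := (hG.differentiableAt (isOpen_ball.mem_nhds hw)).hasDerivAt
    refine (hGw.mul (hl w hw).neg.cexp).congr_deriv ?_
    simp only [Pi.div_apply, Pi.neg_apply]
    field_simp [hne w hw]
    ring
  have hconst : G z * exp (-l z) = G c := by
    simpa [hlc] using isOpen_ball.is_const_of_deriv_eq_zero (convex_ball c R).isPreconnected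
      (fun w hw => (hderiv w hw).differentiableAt.differentiableWithinAt)
      (fun w hw => (hderiv w hw).deriv) hz
      (mem_ball_self (pos_of_mem_ball hz))
  rw [← hconst, mul_assoc, ← exp_add, neg_add_cancel, exp_zero, mul_one]

lemma exists_sq_eq_on_ball {G : ℂ → ℂ} {c : ℂ} {R : ℝ} (hG : DifferentiableOn ℂ G (ball c R))
    (hne : ∀ z ∈ ball c R, G z ≠ 0) (hGc : G c = 1) :
    ∃ F : ℂ → ℂ, DifferentiableOn ℂ F (ball c R) ∧ F c = 1 ∧ ∀ z ∈ ball c R, F z ^ 2 = G z := by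
  obtain ⟨l, hl, hlc, hGl⟩ := exists_eq_mul_exp_on_ball hG hne
  refine ⟨fun z => exp (l z / 2), (hl.div_const 2).cexp, by simp [hlc], fun z hz => ?_⟩
  rw [hGl z hz, hGc, one_mul, ← exp_nat_mul, Nat.cast_two, mul_div_cancel₀ _ two_ne_zero]

lemma norm_sub_one_lt_norm_iff {w : ℂ} : ‖w - 1‖ < ‖w‖ ↔ 1 / 2 < w.re := by
  rw [← sq_lt_sq₀ (norm_nonneg _) (norm_nonneg _), Complex.sq_norm, Complex.sq_norm,
    normSq_apply, normSq_apply]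
  simp only [sub_re, sub_im, one_re, one_im]
  constructor <;> intro h <;> linarith

lemma norm_sub_one_eq_norm_iff {w : ℂ} : ‖w - 1‖ = ‖w‖ ↔ w.re = 1 / 2 := by
  rw [← sq_eq_sq₀ (norm_nonneg _) (norm_nonneg _), Complex.sq_norm, Complex.sq_norm,
    normSq_apply, normSq_apply]
  simp only [sub_re, sub_im, one_re, one_im]
  constructor <;> intro h <;> linarith

lemma exists_re_eq_half_of_not_half_lt_re {F : ℂ → ℂ} {R : ℝ} {z₁ : ℂ}
    (hF : DifferentiableOn ℂ F (ball 0 R)) (hF0 : F 0 = 1) (hne : ∀ z ∈ ball 0 R, F z ≠ 0)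
    (hz₁ : z₁ ∈ ball 0 R) (hre : (F z₁).re ≤ 1 / 2) :
    ∃ z₀ ∈ ball 0 R, (F z₀).re = 1 / 2 ∧ ∃ k : ℝ, 1 ≤ k ∧
      z₀ * deriv F z₀ / F z₀ = k * (F z₀ - 1) := by
  set ω : ℂ → ℂ := fun z => 1 - (F z)⁻¹ with hω
  have hωnorm {z : ℂ} (hz : z ∈ ball 0 R) : ‖ω z‖ = ‖F z - 1‖ / ‖F z‖ := by
    rw [hω, ← norm_div, sub_div, div_self (hne z hz), one_div]
  have hωderiv {z : ℂ} (hz : z ∈ ball 0 R) : HasDerivAt ω (deriv F z / F z ^ 2) z := by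
    have hFz := (hF.differentiableAt (isOpen_ball.mem_nhds hz)).hasDerivAt
    refine ((hFz.inv (hne z hz)).const_sub 1).congr_deriv ?_
    ring
  have hωdiff : DifferentiableOn ℂ ω (ball 0 R) :=
    fun z hz => (hωderiv hz).differentiableAt.differentiableWithinAt
  have hω1 : 1 ≤ ‖ω z₁‖ := by
    rw [hωnorm hz₁, one_le_div (norm_pos_iff.mpr (hne z₁ hz₁))]
    exact not_lt.mp (norm_sub_one_lt_norm_iff.not.mpr hre.not_gt)
  obtain ⟨z₀, hz₀, hω₀, hmax⟩ := exists_mem_ball_forall_closedBall_norm_le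
    hωdiff.continuousOn.norm (by simp [hω, hF0]) hz₁ hω1
  have hFz₀ := hne z₀ hz₀
  obtain ⟨k, hk, hjack⟩ := exists_one_le_mul_deriv_eq_mul hωdiff (by simp [hω, hF0]) hz₀
    (norm_ne_zero_iff.mp (by simp [hω₀])) (by simpa [hω₀] using hmax)
  refine ⟨z₀, hz₀, ?_, k, hk, ?_⟩
  · rwa [hωnorm hz₀, div_eq_one_iff_eq (norm_ne_zero_iff.mpr hFz₀),
      norm_sub_one_eq_norm_iff] at hω₀
  · rw [(hωderiv hz₀).deriv, hω] at hjack
    field_simp at hjack ⊢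
    linear_combination hjack

lemma mul_deriv_div_eq_one_add_of_eq_mul_sq {g F : ℂ → ℂ} {U : Set ℂ} {z : ℂ} (hU : IsOpen U)
    (hF : DifferentiableOn ℂ F U) (hg : ∀ z ∈ U, g z = z * F z ^ 2) (hz : z ∈ U) (hz0 : z ≠ 0)
    (hFz : F z ≠ 0) : z * deriv g z / g z = 1 + 2 * (z * deriv F z / F z) := by
  have hderiv : HasDerivAt (fun z => z * F z ^ 2) (F z ^ 2 + z * (2 * F z * deriv F z)) z := by
    have hF' := (hF.differentiableAt (hU.mem_nhds hz)).hasDerivAt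
    refine ((hasDerivAt_id z).mul (hF'.pow 2)).congr_deriv ?_
    simp
  have hgF : g =ᶠ[nhds z] fun z => z * F z ^ 2 :=
    Filter.eventuallyEq_of_mem (hU.mem_nhds hz) hg
  rw [hgF.deriv_eq, hderiv.deriv, hg z hz]
  field_simp

lemma IsStarlikeFn.dslope_ne_zero {g : ℂ → ℂ} (hg : IsStarlikeFn g) {z : ℂ} (hz : z ∈ ball 0 1) :
    dslope g 0 z ≠ 0 := by
  obtain ⟨-, hg0, hg1, hgs⟩ := hg
  intro hGz
  rcases eq_or_ne z 0 with rfl | hz0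
  · simp [hg1] at hGz
  · have hgz : 0 = g z := by simpa [hGz, hg0] using sub_smul_dslope g 0 z
    simpa [← hgz] using hgs z ⟨hz, hz0⟩

lemma IsStarlikeFn.exists_eq_mul_sq {g : ℂ → ℂ} (hg : IsStarlikeFn g) :
    ∃ F : ℂ → ℂ, DifferentiableOn ℂ F (ball 0 1) ∧ F 0 = 1 ∧ (∀ z ∈ ball 0 1, F z ≠ 0) ∧
      ∀ z ∈ ball 0 1, g z = z * F z ^ 2 := by
  have hne : ∀ z ∈ ball 0 1, dslope g 0 z ≠ 0 := fun z => hg.dslope_ne_zero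
  obtain ⟨hgd, hg0, hg1, -⟩ := hg
  obtain ⟨F, hF, hF0, hFG⟩ := exists_sq_eq_on_ball ((differentiableOn_dslope
    (ball_mem_nhds 0 one_pos)).mpr hgd) hne (by rw [dslope_same, hg1])
  refine ⟨F, hF, hF0, fun z hz hFz => hne z hz (by simp [← hFG z hz, hFz]), fun z hz => ?_⟩
  simpa [hg0, hFG z hz] using (sub_smul_dslope g 0 z).symm

/- The **Marx–Strohhäcker theorem**. If `Re F` first reaches `1/2` at `z₀`, then Jack's lemma for
`1 - 1 / F` gives `z₀ F' z₀ / F z₀ = k (F z₀ - 1)` with `1 ≤ k`, so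
`Re (z₀ g' z₀ / g z₀) = 1 - k ≤ 0`. -/
theorem IsStarlikeFn.exists_eq_mul_sq_half_lt_re {g : ℂ → ℂ} (hg : IsStarlikeFn g) :
    ∃ F : ℂ → ℂ, DifferentiableOn ℂ F (ball 0 1) ∧ F 0 = 1 ∧
      (∀ z ∈ ball 0 1, g z = z * F z ^ 2) ∧ ∀ z ∈ ball 0 1, 1 / 2 < (F z).re := by
  obtain ⟨F, hF, hF0, hFne, hgF⟩ := hg.exists_eq_mul_sq
  refine ⟨F, hF, hF0, hgF, fun z hz => ?_⟩
  by_contra! hre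
  obtain ⟨z₀, hz₀, hre₀, k, hk, hlog⟩ :=
    exists_re_eq_half_of_not_half_lt_re hF hF0 hFne hz hre
  have hz₀0 : z₀ ≠ 0 := by
    rintro rfl
    norm_num [hF0] at hre₀
  have hpos := hg.2.2.2 z₀ ⟨hz₀, hz₀0⟩
  rw [mul_deriv_div_eq_one_add_of_eq_mul_sq isOpen_ball hF hgF hz₀ hz₀0 (hFne z₀ hz₀), hlog,
    add_re, one_re, ← ofReal_ofNat, re_ofReal_mul, re_ofReal_mul, sub_re, hre₀, one_re] at hpos
  linarith

end StarlikeFunctions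

section CloseToConvexFunctions

open PowerSeries ComplexConjugate Topology

lemma IsCloseToConvex.exists_deriv_eq_mul_sq {f : ℂ → ℂ} (hf : IsCloseToConvex f) :
    ∃ (e : ℂ) (p F : ℂ → ℂ), ‖e‖ = 1 ∧
      (DifferentiableOn ℂ p (ball 0 1) ∧ p 0 = 1 ∧ ∀ z ∈ ball 0 1 \ {0}, 0 < (e * p z).re) ∧
      (DifferentiableOn ℂ F (ball 0 1) ∧ F 0 = 1 ∧ ∀ z ∈ ball 0 1, 1 / 2 < (F z).re) ∧
      ∀ z ∈ ball 0 1, deriv f z = p z * F z ^ 2 := by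
  obtain ⟨hfd, -, hf1, θ, g, hg, hre⟩ := hf
  obtain ⟨F, hF, hF0, hgF, hFre⟩ := hg.exists_eq_mul_sq_half_lt_re
  have hFne : ∀ z ∈ ball 0 1, F z ≠ 0 := fun z hz hFz => by
    have := hFre z hz
    norm_num [hFz] at this
  refine ⟨exp (θ * I), fun z => deriv f z / F z ^ 2, F, norm_exp_ofReal_mul_I θ,
    ⟨?_, by simp [hf1, hF0], fun z hz => ?_⟩, ⟨hF, hF0, hFre⟩, fun z hz => ?_⟩
  · exact (hfd.deriv isOpen_ball).div (hF.pow 2) fun z hz => pow_ne_zero 2 (hFne z hz)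
  · have hz0 : z ≠ 0 := hz.2
    have hFz := hFne z hz.1
    convert hre z hz using 2
    rw [hgF z hz.1]
    field_simp
  · exact (div_mul_cancel₀ _ (pow_ne_zero 2 (hFne z hz))).symm

lemma exists_norm_eq_one_re_coeff_mul_taylorSeries_le_geomSeries {F : ℂ → ℂ}
    (hF : DifferentiableOn ℂ F (ball 0 1)) (hF0 : F 0 = 1)
    (hre : ∀ z ∈ ball (0 : ℂ) 1, 1 / 2 < (F z).re) (N : ℕ) (P : ℂ⟦X⟧) :
    ∃ x : ℂ, ‖x‖ = 1 ∧
      (coeff N (P * taylorSeries F)).re ≤ (coeff N (P * geomSeries x)).re := by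
  simpa using exists_norm_eq_one_re_coeff_mul_taylorSeries_le (s := 1 / 2) norm_one hF hF0
    (fun z hz => by simpa using (hre z hz.1).le) N P

lemma exists_norm_le_one_re_coeff_mul_geomSeries_mul_three {x y w : ℂ} (hx : ‖x‖ ≤ 1)
    (hy : ‖y‖ ≤ 1) (hw : ‖w‖ ≤ 1) (N : ℕ) (P : ℂ⟦X⟧) :
    ∃ W : ℂ, ‖W‖ ≤ 1 ∧ (coeff N (P * geomSeries x * geomSeries y * geomSeries w)).re
      = (coeff N (P * geomSeries W ^ 3)).re := by
  have hsegment {a b c : ℂ} (ha : ‖a‖ ≤ 1) (hb : ‖b‖ ≤ 1) (hc : c ∈ segment ℝ a b) : ‖c‖ ≤ 1 := by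
    simpa using (convex_closedBall (0 : ℂ) 1).segment_subset (by simpa using ha)
      (by simpa using hb) hc
  obtain ⟨V, hV, hyw⟩ :=
    exists_mem_segment_re_coeff_mul_geomSeries_pow w y 0 N (P * geomSeries x)
  obtain ⟨W, hW, hxV⟩ := exists_mem_segment_re_coeff_mul_geomSeries_pow V x 1 N P
  refine ⟨W, hsegment hx (hsegment hy hw hV) hW, ?_⟩
  rw [← hxV, ← hyw, zero_add, pow_one]

theorem IsCloseToConvex.exists_re_coeff_mul_taylorSeries_deriv_le {f : ℂ → ℂ}
    (hf : IsCloseToConvex f) (N : ℕ) (P : ℂ⟦X⟧) :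
    ∃ v W : ℂ, ‖v‖ ≤ 1 ∧ ‖W‖ ≤ 1 ∧ (coeff N (P * taylorSeries (deriv f))).re
      ≤ (coeff N (P * ((1 + C v * X) * geomSeries W ^ 3))).re := by
  obtain ⟨e, p, F, he, ⟨hp, hp0, hpre⟩, ⟨hF, hF0, hFre⟩, hdf⟩ := hf.exists_deriv_eq_mul_sq
  have h0 : ball (0 : ℂ) 1 ∈ 𝓝 0 := ball_mem_nhds 0 one_pos
  have hpan := hp.analyticAt h0
  have hFan := hF.analyticAt h0
  have hseries : taylorSeries (deriv f) = taylorSeries p * taylorSeries F * taylorSeries F := by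
    rw [← taylorSeries_mul hpan hFan, ← taylorSeries_mul (hpan.mul hFan) hFan]
    refine taylorSeries_congr (Filter.eventuallyEq_of_mem h0 fun z hz => ?_)
    rw [hdf z hz, Pi.mul_apply, Pi.mul_apply, mul_assoc, pow_two]
  obtain ⟨x, hx, hFx⟩ := exists_norm_eq_one_re_coeff_mul_taylorSeries_le_geomSeries hF hF0 hFre N
    (P * taylorSeries p * taylorSeries F)
  obtain ⟨y, hy, hFy⟩ := exists_norm_eq_one_re_coeff_mul_taylorSeries_le_geomSeries hF hF0 hFre N
    (P * taylorSeries p * geomSeries x)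
  obtain ⟨w, hw, hpw⟩ := exists_norm_eq_one_re_coeff_mul_taylorSeries_le he hp hp0
    (fun z hz => (hpre z hz).le) N (P * geomSeries x * geomSeries y)
  set v := conj e * (conj e - 2 * (0 : ℝ)) * w with hv
  obtain ⟨W, hW, hmerge⟩ := exists_norm_le_one_re_coeff_mul_geomSeries_mul_three hx.le hy.le hw.le N
    (P * (1 + C v * X))
  refine ⟨v, W, by simp [hv, he, hw], hW, ?_⟩
  calc (coeff N (P * taylorSeries (deriv f))).re
      = (coeff N (P * taylorSeries p * taylorSeries F * taylorSeries F)).re := by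
        rw [hseries]; ring_nf
    _ ≤ (coeff N (P * taylorSeries p * taylorSeries F * geomSeries x)).re := hFx
    _ = (coeff N (P * taylorSeries p * geomSeries x * taylorSeries F)).re := by
        rw [mul_right_comm]
    _ ≤ (coeff N (P * taylorSeries p * geomSeries x * geomSeries y)).re := hFy
    _ = (coeff N (P * geomSeries x * geomSeries y * taylorSeries p)).re := by ring_nf
    _ ≤ (coeff N (P * geomSeries x * geomSeries y * ((1 + C v * X) * geomSeries w))).re := hpw
    _ = (coeff N (P * (1 + C v * X) * geomSeries x * geomSeries y * geomSeries w)).re := by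
        ring_nf
    _ = _ := by rw [hmerge, mul_assoc P]

lemma IsCloseToConvex.exists_re_taylorCoeff_three_five_le {f : ℂ → ℂ} (hf : IsCloseToConvex f)
    (α β : ℂ) :
    ∃ u v : ℂ, ‖u‖ ≤ 1 ∧ ‖v‖ ≤ 1 ∧ (α * taylorCoeff f 3 + β * taylorCoeff f 5).re
      ≤ (α * (2 * u + v) + β * (3 * u ^ 2 + 2 * u * v)).re := by
  set P : ℂ⟦X⟧ := C (β / 5) + C (α / 3) * X ^ 2 with hP
  have hcoeff (S : ℂ⟦X⟧) : coeff 4 (P * S) = β / 5 * coeff 4 S + α / 3 * coeff 2 S := by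
    rw [hP, add_mul, mul_assoc, map_add, coeff_C_mul, coeff_C_mul, coeff_X_pow_mul' S 2 4,
      if_pos (by norm_num)]
  obtain ⟨v, W, hv, hW, hle⟩ := hf.exists_re_coeff_mul_taylorSeries_deriv_le 4 P
  refine ⟨W ^ 2, v * W, ?_, ?_, ?_⟩
  · rw [norm_pow]
    exact pow_le_one₀ (norm_nonneg W) hW
  · rw [norm_mul]
    exact mul_le_one₀ hv (norm_nonneg W) hW
  · rw [hcoeff, hcoeff, coeff_taylorSeries, coeff_taylorSeries, taylorCoeff_deriv,
      taylorCoeff_deriv, coeff_succ_one_add_C_mul_X_mul v _ 3, coeff_succ_one_add_C_mul_X_mul v _ 1]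
      at hle
    simp only [coeff_geomSeries_pow_succ W 2] at hle
    convert hle using 2
    · push_cast
      ring
    · simp only [Nat.choose, add_zero, Nat.reduceAdd, Nat.cast_ofNat, pow_one]
      ring

end CloseToConvexFunctions

lemma quadratic_form_nonneg {A B C : ℝ} (hA : 0 < A) (hB : B ^ 2 ≤ A * C) (x y : ℝ) :
    0 ≤ A * x ^ 2 + 2 * B * x * y + C * y ^ 2 := by
  refine nonneg_of_mul_nonneg_right (a := A) ?_ hA
  linear_combination sq_nonneg (A * x + B * y) + y ^ 2 * hB

lemma mul_re_sq_sub_re_le {lam a b : ℝ} (ha : 0 < a) (hab : a * b = 1) (hlam : lam ≤ 3 / 2)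
    (hrel : (6 - 4 * lam) * b - lam * a = 2 * lam) {u v : ℂ} (hu : ‖u‖ ≤ 1) (hv : ‖v‖ ≤ 1) :
    lam * (2 * u + v).re ^ 2 - (3 * u ^ 2 + 2 * u * v).re ≤ 3 + a + b := by
  have hb : 0 < b := pos_of_mul_pos_right (by rw [hab]; exact one_pos) ha.le
  have hdisc {w : ℂ} (hw : ‖w‖ ≤ 1) : w.re ^ 2 + w.im ^ 2 ≤ 1 := by
    rw [← normSq_add_mul_I, re_add_im, normSq_eq_norm_sq]
    exact pow_le_one₀ (norm_nonneg w) hw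
  have hre := quadratic_form_nonneg (A := a + 6 - 4 * lam) (B := 1 - 2 * lam) (C := b - lam)
    (by linarith) (by linear_combination -hab - hrel) u.re v.re
  have him := quadratic_form_nonneg (A := a) (B := -1) (C := b) ha
    (by linear_combination -hab) u.im v.im
  have hlin : (2 * u + v).re = 2 * u.re + v.re := by simp
  have hquad : (3 * u ^ 2 + 2 * u * v).re
      = 3 * (u.re ^ 2 - u.im ^ 2) + 2 * (u.re * v.re - u.im * v.im) := by
    simp only [pow_two, add_re, mul_re, mul_im, re_ofNat, im_ofNat]
    ring
  rw [hlin, hquad]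
  linear_combination hre + him + (3 + a) * hdisc hu + b * hdisc hv

lemma exists_norm_eq_one_pow_mul_eq_norm (w : ℂ) {n : ℕ} (hn : n ≠ 0) :
    ∃ ζ : ℂ, ‖ζ‖ = 1 ∧ ζ ^ n * w = ‖w‖ := by
  obtain ⟨c, hc, hcw⟩ := exists_norm_eq_mul_self w
  obtain ⟨ζ, rfl⟩ := IsAlgClosed.exists_pow_nat_eq c (Nat.pos_of_ne_zero hn)
  exact ⟨ζ, (pow_eq_one_iff_of_nonneg (norm_nonneg ζ) hn).mp (by rwa [← norm_pow]), hcw.symm⟩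

lemma IsCloseToConvex.norm_mul_taylorCoeff_three_sq_sub_le {f : ℂ → ℂ} (hf : IsCloseToConvex f)
    {lam M : ℝ} (hlam : 0 ≤ lam) (hM : ∀ u v : ℂ, ‖u‖ ≤ 1 → ‖v‖ ≤ 1 →
      lam * (2 * u + v).re ^ 2 - (3 * u ^ 2 + 2 * u * v).re ≤ M) :
    ‖lam * taylorCoeff f 3 ^ 2 - taylorCoeff f 5‖ ≤ M := by
  obtain ⟨ζ, hζ, hrot⟩ := exists_norm_eq_one_pow_mul_eq_norm
    (lam * taylorCoeff f 3 ^ 2 - taylorCoeff f 5) four_ne_zero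
  set A := ζ ^ 2 * taylorCoeff f 3 with hA
  -- The slope `2 * lam * A.re` is that of the tangent at `A.re` to the parabola `lam * x ^ 2`.
  obtain ⟨u, v, hu, hv, hle⟩ :=
    hf.exists_re_taylorCoeff_three_five_le ((2 * lam * A.re : ℝ) * ζ ^ 2) (-ζ ^ 4)
  set U := ζ ^ 2 * u with hU
  set V := ζ ^ 2 * v with hV
  have hkernel := hM U V (by simpa [hU, hζ] using hu) (by simpa [hV, hζ] using hv)
  have hleft : ((2 * lam * A.re : ℝ) * ζ ^ 2 * taylorCoeff f 3 + -ζ ^ 4 * taylorCoeff f 5).re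
      = 2 * lam * A.re * A.re - (ζ ^ 4 * taylorCoeff f 5).re := by
    rw [mul_assoc, ← hA, neg_mul, ← sub_eq_add_neg, sub_re, re_ofReal_mul]
  have hright : ((2 * lam * A.re : ℝ) * ζ ^ 2 * (2 * u + v)
      + -ζ ^ 4 * (3 * u ^ 2 + 2 * u * v)).re
        = 2 * lam * A.re * (2 * U + V).re - (3 * U ^ 2 + 2 * U * V).re := by
    rw [← re_ofReal_mul (2 * lam * A.re), ← sub_re, hU, hV]
    ring_nf
  have hnorm : ‖lam * taylorCoeff f 3 ^ 2 - taylorCoeff f 5‖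
      = lam * (A.re ^ 2 - A.im ^ 2) - (ζ ^ 4 * taylorCoeff f 5).re := by
    have hsq : (A ^ 2).re = A.re ^ 2 - A.im ^ 2 := by simp [pow_two]
    rw [← ofReal_re ‖_‖, ← hrot, ← hsq, ← re_ofReal_mul, ← sub_re, hA]
    ring_nf
  rw [hleft, hright] at hle
  linear_combination hnorm + hle + hkernel + lam * sq_nonneg A.im
    + lam * sq_nonneg ((2 * U + V).re - A.re)

theorem generalized_zalcman_closeToConvex_n3_middle_lambda_general {lam : ℝ} (hlam0 : 0 < lam)
    (hlam : lam < 3 / 2) {f : ℂ → ℂ} (hf : IsCloseToConvex f) :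
    ‖(lam : ℂ) * (taylorCoeff f 3) ^ 2 - taylorCoeff f 5‖ ≤
      (lam * (12 - 7 * lam) + 3 * (2 - lam) * Real.sqrt (3 * lam * (2 - lam)))
        / (lam * (6 - 4 * lam)) := by
  set D := 6 - 4 * lam with hD
  have hDpos : 0 < D := by linarith
  set S := √(3 * lam * (2 - lam))
  have hS2 : S ^ 2 = 3 * lam * (2 - lam) :=
    Real.sq_sqrt (mul_nonneg (by linarith) (by linarith))
  have hlamS : lam < S := Real.lt_sqrt_of_sq_lt <| by
    linear_combination mul_pos hlam0 hDpos - lam * hD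
  -- The fractions `a`, `b` on the right solve `a * b = 1`, `(6 - 4 * lam) * b - lam * a = 2 * lam`.
  have hbound : (lam * (12 - 7 * lam) + 3 * (2 - lam) * S) / (lam * D)
      = 3 + (S - lam) / lam + (S + lam) / D := by
    field_simp
    linear_combination -(2 * lam + S) * hD
  rw [hbound]
  refine hf.norm_mul_taylorCoeff_three_sq_sub_le hlam0.le fun u v hu hv =>
    mul_re_sq_sub_re_le (div_pos (sub_pos.mpr hlamS) hlam0) ?_ hlam.le ?_ hu hv
  · field_simp
    linear_combination hS2 - lam * hD
  · field_simp
    ring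

theorem generalized_zalcman_closeToConvex_n3_middle_lambda
    (lam : ℝ) (hlam1 : 6 / 7 < lam) (hlam2 : lam < (9 + Real.sqrt 33) / 12)
    (f : ℂ → ℂ) (hf : IsCloseToConvex f) :
    ‖(lam : ℂ) * (taylorCoeff f 3) ^ 2 - taylorCoeff f 5‖ ≤
      (lam * (12 - 7 * lam) + 3 * (2 - lam) * Real.sqrt (3 * lam * (2 - lam)))
        / (lam * (6 - 4 * lam)) := by
  have hsqrt : √33 < 9 := by rw [Real.sqrt_lt'] <;> norm_num
  exact generalized_zalcman_closeToConvex_n3_middle_lambda_general (by linarith) (by linarith) hf
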